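/- arXiv:1704.04288 — 2 statements merged into one kernel-verified Lean document; each statement's English description precedes it below -/
import Mathlib

section
/- For every integer k ≥ 1, setting n = 2^k − 1, there is exactly one permutation π of length n with sep(π) = τ(n) = n − 1 − ⌊log₂(n)⌋; that is, the permutation of length 2^k − 1 of maximal tier is unique. -/
/-- `(v+1, v)` (0-based values) is a separated pair of `π`. -/
def IsSepPair {n : ℕ} (π : Equiv.Perm (Fin n)) (v : Fin n) : Prop :=
  ∃ p q r : Fin n, p < q ∧ q < r ∧
    (π p : ℕ) = (v : ℕ) + 1 ∧ (v : ℕ) + 1 < (π q : ℕ) ∧ π r = v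

/-- number of separated pairs of `π`. -/
noncomputable def sep {n : ℕ} (π : Equiv.Perm (Fin n)) : ℕ :=
  {v : Fin n | IsSepPair π v}.ncard

/-- `tau n` is the maximum of `sep` over all permutations of length `n`. -/
noncomputable def tau (n : ℕ) : ℕ :=
  Finset.univ.sup fun π : Equiv.Perm (Fin n) => sep π

/-- `v` is separated, in terms of the position function. -/
def Sp (n : ℕ) (pos : ℕ → ℕ) (v : ℕ) : Prop :=
  ∃ w, v + 1 < w ∧ w < n ∧ pos (v + 1) < pos w ∧ pos w < pos v

open Classical in
/-- number of non-separated values at least `t`. -/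
noncomputable def nonsep (n : ℕ) (pos : ℕ → ℕ) (t : ℕ) : ℕ :=
  ((Finset.Ico t n).filter fun v => ¬ Sp n pos v).card

/-- values above `a` placed before position `x`. -/
def Before (n : ℕ) (pos : ℕ → ℕ) (a x : ℕ) : Finset ℕ :=
  (Finset.Ioo a n).filter fun u => pos u < x

/-- values above `a` placed after position `x`. -/
def After (n : ℕ) (pos : ℕ → ℕ) (a x : ℕ) : Finset ℕ :=
  (Finset.Ioo a n).filter fun u => x < pos u

lemma run_anti {n : ℕ} {pos : ℕ → ℕ} {t a : ℕ}
    (h : ∀ i, t ≤ i → i < a → Sp n pos i) (i j : ℕ) (hi : t ≤ i) (hij : i < j) (hj : j ≤ a) :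
    pos j < pos i := by
  induction j, hij using Nat.le_induction with
  | base =>
    obtain ⟨w, _, _, h1, h2⟩ := h i hi (by omega)
    exact h1.trans h2
  | succ j hij ih =>
    obtain ⟨w, _, _, h1, h2⟩ := h j (by omega) (by omega)
    have := ih (by omega)
    omega

lemma run_wit {n : ℕ} {pos : ℕ → ℕ} {t a : ℕ}
    (h : ∀ i, t ≤ i → i < a → Sp n pos i) (i : ℕ) (hi : t ≤ i) (hia : i < a) :
    ∃ w, a < w ∧ w < n ∧ pos (i + 1) < pos w ∧ pos w < pos i := by
  obtain ⟨w, h1, h2, h3, h4⟩ := h i hi hia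
  refine ⟨w, ?_, h2, h3, h4⟩
  by_contra hc
  have := run_anti h (i + 1) w (by omega) h1 (by omega)
  omega

lemma before_card {n : ℕ} {pos : ℕ → ℕ} {t a : ℕ}
    (h : ∀ i, t ≤ i → i < a → Sp n pos i) (d i : ℕ) (hi : t ≤ i) (hd : i + d = a) :
    d ≤ (Before n pos a (pos i)).card := by
  induction d generalizing i with
  | zero => omega
  | succ d ih =>
    have := ih (i + 1) (by omega) (by omega)
    obtain ⟨w, h1, h2, h3, h4⟩ := run_wit h i hi (by omega)
    refine Nat.succ_le_of_lt (this.trans_lt (Finset.card_lt_card ?_))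
    rw [Finset.ssubset_iff_of_subset]
    · refine ⟨w, ?_, ?_⟩
      · simp [Before]; omega
      · simp [Before]; omega
    · intro x
      simp only [Before, Finset.mem_filter, Finset.mem_Ioo]
      omega

lemma after_card {n : ℕ} {pos : ℕ → ℕ} {t a : ℕ}
    (h : ∀ i, t ≤ i → i < a → Sp n pos i) (d : ℕ) (hd : t + d ≤ a) :
    d ≤ (After n pos a (pos (t + d))).card := by
  induction d with
  | zero => omega
  | succ d ih =>
    have := ih (by omega)
    obtain ⟨w, h1, h2, h3, h4⟩ := run_wit h (t + d) (by omega) (by omega)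
    refine Nat.succ_le_of_lt (this.trans_lt (Finset.card_lt_card ?_))
    rw [← add_assoc, Finset.ssubset_iff_of_subset]
    · refine ⟨w, ?_, ?_⟩
      · simp [After]; omega
      · simp [After]; omega
    · intro x
      simp only [After, Finset.mem_filter, Finset.mem_Ioo]
      omega

lemma before_after {n : ℕ} {pos : ℕ → ℕ} {a x : ℕ} :
    (Before n pos a x).card + (After n pos a x).card ≤ n - a - 1 := by
  rw [← Finset.card_union_of_disjoint, ← Nat.card_Ioo]
  · apply Finset.card_le_card
    intro y
    simp only [Before, After, Finset.mem_union, Finset.mem_filter]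
    tauto
  · rw [Finset.disjoint_left]
    intro y
    simp only [Before, After, Finset.mem_filter]
    omega

lemma run_len {n : ℕ} {pos : ℕ → ℕ} {t a : ℕ} (hta : t ≤ a)
    (h : ∀ i, t ≤ i → i < a → Sp n pos i) : a - t ≤ n - a - 1 := by
  have h1 := before_card h (a - t) t le_rfl (by omega)
  have h2 := before_after (n := n) (pos := pos) (a := a) (x := pos t)
  omega

lemma run_eq {n : ℕ} {pos : ℕ → ℕ} {t a : ℕ}
    (h : ∀ i, t ≤ i → i < a → Sp n pos i) (he : a - t = n - a - 1) (i : ℕ) (hi : t ≤ i)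
    (hia : i ≤ a) : (Before n pos a (pos i)).card = a - i := by
  have h1 := before_card h (a - i) i hi (by omega)
  have h2 := before_after (n := n) (pos := pos) (a := a) (x := pos i)
  have h3 := after_card h (i - t) (by omega)
  rw [show t + (i - t) = i by omega] at h3
  omega

lemma decomp {n : ℕ} {pos : ℕ → ℕ} {t : ℕ} (ht : t < n) :
    ∃ a, t ≤ a ∧ a < n ∧ (∀ i, t ≤ i → i < a → Sp n pos i) ∧
      nonsep n pos t = nonsep n pos (a + 1) + 1 := by
  classical
  have hex : ∃ a, t ≤ a ∧ a < n ∧ ¬ Sp n pos a := by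
    refine ⟨n - 1, by omega, by omega, ?_⟩
    rintro ⟨w, h1, h2, _⟩
    omega
  obtain ⟨h1, h2, h3⟩ := Nat.find_spec hex
  have hmin : ∀ i, t ≤ i → i < Nat.find hex → Sp n pos i := by
    intro i hi hia
    have := Nat.find_min hex hia
    by_contra hc
    exact this ⟨hi, by omega, hc⟩
  generalize Nat.find hex = a at *
  refine ⟨a, h1, h2, hmin, ?_⟩
  unfold nonsep
  rw [← Finset.card_insert_of_notMem (a := a)]
  · congr 1
    ext x
    simp only [Finset.mem_filter, Finset.mem_insert, Finset.mem_Ico]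
    constructor
    · rintro ⟨⟨hx1, hx2⟩, hx3⟩
      rcases lt_trichotomy x a with hlt | heq | hgt
      · exact absurd (hmin x hx1 hlt) hx3
      · exact Or.inl heq
      · exact Or.inr ⟨⟨hgt, hx2⟩, hx3⟩
    · rintro (rfl | ⟨⟨hx1, hx2⟩, hx3⟩)
      · exact ⟨⟨h1, h2⟩, h3⟩
      · exact ⟨⟨by omega, hx2⟩, hx3⟩
  · simp

lemma bound_aux {n : ℕ} {pos : ℕ → ℕ} (k t : ℕ) (hk : nonsep n pos t = k) :
    n - t + 1 ≤ 2 ^ k := by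
  induction k generalizing t with
  | zero =>
    by_contra hc
    obtain ⟨a, h1, h2, h3, h4⟩ := decomp (pos := pos) (t := t) (n := n) (by simp at hc; omega)
    omega
  | succ k ih =>
    rcases le_or_gt n t with ht | ht
    · rw [Nat.sub_eq_zero_of_le ht]; exact Nat.one_le_two_pow
    obtain ⟨a, h1, h2, h3, h4⟩ := decomp (pos := pos) (t := t) (n := n) ht
    have := ih (a + 1) (by omega)
    have := run_len h1 h3
    rw [pow_succ]
    omega

lemma upper_iff {n : ℕ} {pos : ℕ → ℕ} {a u i : ℕ} (hinj : Set.InjOn pos (Set.Iio n))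
    (hu : a < u) (hun : u < n) (hi : i ≤ a) :
    pos u < pos i ↔ (Before n pos a (pos u)).card < (Before n pos a (pos i)).card := by
  constructor
  · intro h
    apply Finset.card_lt_card
    rw [Finset.ssubset_iff_of_subset]
    · refine ⟨u, ?_, ?_⟩
      · simp [Before]; omega
      · simp [Before]
    · intro x
      simp only [Before, Finset.mem_filter, Finset.mem_Ioo]
      omega
  · intro h
    by_contra hc
    refine absurd h (not_lt.2 (Finset.card_le_card ?_))
    intro x
    simp only [Before, Finset.mem_filter, Finset.mem_Ioo]
    omega

lemma order_unique {n : ℕ} {pos pos' : ℕ → ℕ} (hinj : Set.InjOn pos (Set.Iio n))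
    (hinj' : Set.InjOn pos' (Set.Iio n)) (k t : ℕ) (hk : nonsep n pos t = k)
    (hk' : nonsep n pos' t = k) (hn : n - t + 1 = 2 ^ k) (u v : ℕ) (hu : t ≤ u) (hun : u < n)
    (hv : t ≤ v) (hvn : v < n) : pos u < pos v ↔ pos' u < pos' v := by
  induction k generalizing t u v with
  | zero => simp at hn; omega
  | succ k ih =>
    obtain ⟨a, h1, h2, h3, h4⟩ := decomp (pos := pos) (t := t) (n := n) (by omega)
    obtain ⟨a', h1', h2', h3', h4'⟩ := decomp (pos := pos') (t := t) (n := n) (by omega)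
    have b := bound_aux (pos := pos) (n := n) k (a + 1) (by omega)
    have b' := bound_aux (pos := pos') (n := n) k (a' + 1) (by omega)
    have l := run_len h1 h3
    have l' := run_len h1' h3'
    rw [pow_succ] at hn
    obtain rfl : a = a' := by omega
    have he : a - t = n - a - 1 := by omega
    have IH := ih (a + 1) (by omega) (by omega) (by omega)
    have hB : ∀ u, a < u → u < n → Before n pos a (pos u) = Before n pos' a (pos' u) := by
      intro u hu hun
      apply Finset.filter_congr
      intro x hx
      rw [Finset.mem_Ioo] at hx
      exact IH x u hx.1 hx.2 hu hun
    have key : ∀ u i, a < u → u < n → t ≤ i → i ≤ a → (pos u < pos i ↔ pos' u < pos' i) := by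
      intro u i hu hun hi hia
      rw [upper_iff hinj hu hun hia, upper_iff hinj' hu hun hia, hB u hu hun,
        run_eq h3 he i hi hia, run_eq h3' he i hi hia]
    rcases le_or_gt u a with hua | hua <;> rcases le_or_gt v a with hva | hva
    · rcases lt_trichotomy u v with h | h | h
      · have := run_anti h3 u v hu h hva
        have := run_anti h3' u v hu h hva
        omega
      · subst h; simp
      · have := run_anti h3 v u hv h hua
        have := run_anti h3' v u hv h hua
        omega
    · have := key v u hva hvn hu hua
      have e : pos u ≠ pos v := fun e => by
        have := hinj hun hvn e
        omega
      have e' : pos' u ≠ pos' v := fun e => by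
        have := hinj' hun hvn e
        omega
      omega
    · exact key u v hua hun hv hva
    · exact IH u v hua hun hva hvn

/-- position function of a permutation. -/
def posOf {n : ℕ} (π : Equiv.Perm (Fin n)) (v : ℕ) : ℕ :=
  if h : v < n then (π.symm ⟨v, h⟩ : ℕ) else 0

lemma posOf_inj {n : ℕ} (π : Equiv.Perm (Fin n)) : Set.InjOn (posOf π) (Set.Iio n) := by
  intro u hu v hv h
  simp only [Set.mem_Iio] at hu hv
  simp only [posOf, hu, hv, dif_pos] at h
  have := π.symm.injective (Fin.ext h)
  simpa using this

lemma posOf_apply {n : ℕ} (π : Equiv.Perm (Fin n)) (p : Fin n) : posOf π (π p) = p := by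
  simp [posOf]

lemma isSepPair_iff {n : ℕ} (π : Equiv.Perm (Fin n)) (v : Fin n) :
    IsSepPair π v ↔ Sp n (posOf π) v := by
  constructor
  · rintro ⟨p, q, r, hpq, hqr, h1, h2, h3⟩
    refine ⟨π q, h2, (π q).2, ?_, ?_⟩
    · rw [← h1, posOf_apply, posOf_apply]; exact hpq
    · rw [← h3, posOf_apply, posOf_apply]; exact hqr
  · rintro ⟨w, h1, h2, h3, h4⟩
    have hv : (v : ℕ) + 1 < n := by omega
    refine ⟨π.symm ⟨v + 1, hv⟩, π.symm ⟨w, h2⟩, π.symm v, ?_, ?_, ?_, ?_, ?_⟩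
    · simpa [posOf, hv, h2] using h3
    · simpa [posOf, h2] using h4
    · simp
    · simpa using h1
    · simp

lemma sep_add {n : ℕ} (π : Equiv.Perm (Fin n)) : sep π + nonsep n (posOf π) 0 = n := by
  classical
  have h1 : sep π = ((Finset.range n).filter fun v => Sp n (posOf π) v).card := by
    unfold sep
    rw [← Set.ncard_image_of_injective _ Fin.val_injective, ← Set.ncard_coe_finset]
    congr 1
    ext x
    simp only [Set.mem_image, Set.mem_setOf_eq, isSepPair_iff, Finset.coe_filter,
      Finset.mem_range]
    constructor
    · rintro ⟨v, hv, rfl⟩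
      exact ⟨v.2, hv⟩
    · rintro ⟨hx, h⟩
      exact ⟨⟨x, hx⟩, h, rfl⟩
  have h2 : nonsep n (posOf π) 0 = ((Finset.range n).filter fun v => ¬ Sp n (posOf π) v).card := by
    unfold nonsep
    rw [Nat.Ico_zero_eq_range]
  rw [h1, h2, Finset.card_filter_add_card_filter_not, Finset.card_range]

lemma sep_le {k : ℕ} (π : Equiv.Perm (Fin (2 ^ k - 1))) : sep π ≤ 2 ^ k - 1 - k := by
  have h := bound_aux (n := 2 ^ k - 1) (pos := posOf π) _ 0 rfl
  have h0 : 0 < 2 ^ k := by positivity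
  rw [show 2 ^ k - 1 - 0 + 1 = 2 ^ k by omega] at h
  have := (Nat.pow_le_pow_iff_right (by norm_num : 1 < 2)).1 h
  have := sep_add π
  omega

/-- the extremal word. -/
def word : ℕ → ℕ → ℕ
  | 0, _ => 0
  | k + 1, p => if p % 2 = 0 then 2 ^ k - 1 - p / 2 else word k (p / 2) + 2 ^ k

lemma word_lt (k p : ℕ) (hp : p < 2 ^ k - 1) : word k p < 2 ^ k - 1 := by
  induction k generalizing p with
  | zero => simp at hp
  | succ k ih =>
    rw [pow_succ] at *
    unfold word
    split_ifs with h
    · omega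
    · have := ih (p / 2) (by omega)
      omega

lemma word_inj (k p q : ℕ) (hp : p < 2 ^ k - 1) (hq : q < 2 ^ k - 1) (h : word k p = word k q) :
    p = q := by
  induction k generalizing p q with
  | zero => simp at hp
  | succ k ih =>
    rw [pow_succ] at *
    unfold word at h
    split_ifs at h with h1 h2 h2
    · omega
    · omega
    · omega
    · have := ih (p / 2) (q / 2) (by omega) (by omega) (by omega)
      omega

lemma word_sep (k : ℕ) : ∃ S : Finset ℕ, S.card ≤ k ∧ ∀ v < 2 ^ k - 1, v ∉ S →
    ∃ p q r, p < q ∧ q < r ∧ r < 2 ^ k - 1 ∧ word k p = v + 1 ∧ v + 1 < word k q ∧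
      word k r = v := by
  induction k with
  | zero => exact ⟨∅, by simp, by simp⟩
  | succ k ih =>
    obtain ⟨S, hS, h⟩ := ih
    refine ⟨insert (2 ^ k - 1) (S.image (· + 2 ^ k)), ?_, ?_⟩
    · have h1 := Finset.card_insert_le (2 ^ k - 1) (S.image (· + 2 ^ k))
      have h2 := Finset.card_image_le (s := S) (f := (· + 2 ^ k))
      omega
    · intro v hv hvS
      rw [Finset.mem_insert, not_or] at hvS
      obtain ⟨hv1, hv2⟩ := hvS
      rw [pow_succ] at *
      rcases lt_or_ge v (2 ^ k - 1) with hlt | hge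
      · refine ⟨2 * (2 ^ k - 2 - v), 2 * (2 ^ k - 2 - v) + 1, 2 * (2 ^ k - 2 - v) + 2,
          by omega, by omega, by omega, ?_, ?_, ?_⟩
        · simp only [word]; rw [if_pos (by omega)]; omega
        · simp only [word]; rw [if_neg (by omega)]; omega
        · simp only [word]; rw [if_pos (by omega)]; omega
      · obtain ⟨p, q, r, hpq, hqr, hr, e1, e2, e3⟩ := h (v - 2 ^ k) (by omega) (by
          intro hm
          apply hv2
          rw [Finset.mem_image]
          exact ⟨_, hm, by omega⟩)
        have hw : ∀ x, word (k + 1) (2 * x + 1) = word k x + 2 ^ k := by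
          intro x
          simp only [word]
          rw [if_neg (by omega), show (2 * x + 1) / 2 = x by omega]
        refine ⟨2 * p + 1, 2 * q + 1, 2 * r + 1, by omega, by omega, by omega, ?_, ?_, ?_⟩ <;>
          rw [hw] <;> omega

lemma exists_ext (k : ℕ) : ∃ π : Equiv.Perm (Fin (2 ^ k - 1)), 2 ^ k - 1 - k ≤ sep π := by
  classical
  let f : Fin (2 ^ k - 1) → Fin (2 ^ k - 1) := fun p => ⟨word k p, word_lt k p p.2⟩
  have hf : Function.Injective f := by
    intro p q h
    exact Fin.ext (word_inj k p q p.2 q.2 (by simpa [f] using h))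
  refine ⟨Equiv.ofBijective f (Finite.injective_iff_bijective.1 hf), ?_⟩
  set π := Equiv.ofBijective f (Finite.injective_iff_bijective.1 hf) with hπ
  have hval : ∀ p, (π p : ℕ) = word k p := fun p => rfl
  obtain ⟨S, hS, h⟩ := word_sep k
  have hle : nonsep (2 ^ k - 1) (posOf π) 0 ≤ k := by
    refine le_trans (Finset.card_le_card ?_) hS
    intro v hv
    simp only [Finset.mem_filter, Finset.mem_Ico] at hv
    by_contra hvS
    obtain ⟨p, q, r, hpq, hqr, hr, e1, e2, e3⟩ := h v hv.1.2 hvS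
    apply hv.2
    refine (isSepPair_iff π ⟨v, hv.1.2⟩).1 ⟨⟨p, by omega⟩, ⟨q, by omega⟩, ⟨r, hr⟩, hpq, hqr,
      ?_, ?_, ?_⟩
    · rw [hval]; exact e1
    · rw [hval]; exact e2
    · apply Fin.ext; rw [hval]; exact e3
  have := sep_add π
  omega

lemma tau_eq (k : ℕ) : tau (2 ^ k - 1) = 2 ^ k - 1 - k := by
  apply le_antisymm
  · exact Finset.sup_le fun π _ => sep_le π
  · obtain ⟨π, hπ⟩ := exists_ext k
    exact hπ.trans (Finset.le_sup (f := fun π : Equiv.Perm (Fin (2 ^ k - 1)) => sep π)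
      (Finset.mem_univ π))

lemma perm_unique (k : ℕ) (π σ : Equiv.Perm (Fin (2 ^ k - 1))) (h : sep π = 2 ^ k - 1 - k)
    (h' : sep σ = 2 ^ k - 1 - k) : π = σ := by
  have h0 : k < 2 ^ k := Nat.lt_two_pow_self
  have a1 := sep_add π
  have a2 := sep_add σ
  have ord := order_unique (posOf_inj π) (posOf_inj σ) k 0 (by omega) (by omega) (by omega)
  have hlt : ∀ u v, π.symm u < π.symm v ↔ σ.symm u < σ.symm v := by
    intro u v
    have := ord u v (by omega) u.2 (by omega) v.2
    simpa [posOf] using this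
  have hmono : StrictMono (fun p => σ.symm (π p)) := by
    intro p q hpq
    rw [← hlt]
    simpa using hpq
  let e : Fin (2 ^ k - 1) ≃o Fin (2 ^ k - 1) :=
    StrictMono.orderIsoOfSurjective _ hmono (σ.symm.surjective.comp π.surjective)
  have he : e = OrderIso.refl _ := Subsingleton.elim _ _
  ext p
  have h1 : σ.symm (π p) = p := by
    have : e p = p := by rw [he]; rfl
    exact this
  rw [Equiv.symm_apply_eq] at h1
  rw [h1]

/-- For `n = 2^k - 1`, there is exactly one permutation of length `n` of
maximal tier `τ(n) = n - 1 - ⌊log₂ n⌋`. -/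
theorem unique_max_tier (k : ℕ) (hk : 1 ≤ k) :
    tau (2 ^ k - 1) = (2 ^ k - 1) - 1 - Nat.log 2 (2 ^ k - 1) ∧
    ∃! π : Equiv.Perm (Fin (2 ^ k - 1)), sep π = tau (2 ^ k - 1) := by
  have ht := tau_eq k
  constructor
  · have hlog : Nat.log 2 (2 ^ k - 1) = k - 1 := by
      obtain ⟨m, rfl⟩ : ∃ m, k = m + 1 := ⟨k - 1, by omega⟩
      have h0 : 0 < 2 ^ m := by positivity
      rw [Nat.log_eq_iff (Or.inr ⟨by norm_num, by rw [pow_succ]; omega⟩)]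
      simp only [Nat.add_sub_cancel, pow_succ]
      omega
    rw [ht, hlog]
    omega
  · rw [ht]
    obtain ⟨π, hπ⟩ := exists_ext k
    have e : sep π = 2 ^ k - 1 - k := le_antisymm (sep_le π) hπ
    exact ⟨π, e, fun σ hσ => perm_unique k σ π hσ e⟩
end

section
/- Let π be a permutation written as π = σ_1 ⊖ σ_2 ⊖ ⋯ ⊖ σ_p where each σ_i is minus-indecomposable and p ≥ 1, and let r be the number of indices i with 1 ≤ i ≤ p−1 such that σ_i has length one. Then sep(π) = p − r − 1 + Σ_{i=1}^{p} sep(σ_i). -/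
/-- skew sum `σ ⊖ τ` of permutations. -/
def ssum {m k : ℕ} (σ : Equiv.Perm (Fin m)) (τ : Equiv.Perm (Fin k)) :
    Equiv.Perm (Fin (m + k)) :=
  finSumFinEquiv.symm.trans ((Equiv.sumCongr σ τ).trans
    (((Equiv.sumComm (Fin m) (Fin k)).trans finSumFinEquiv).trans
      (finCongr (Nat.add_comm k m))))

/-- a permutation of unspecified length. -/
def PermSig := Σ n : ℕ, Equiv.Perm (Fin n)

/-- a permutation is minus-indecomposable if it is nonempty and is not a skew
sum of two nonempty permutations. -/
def MinusIndec (a : PermSig) : Prop :=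
  a.1 ≠ 0 ∧ ¬ ∃ (m k : ℕ) (σ : Equiv.Perm (Fin m)) (τ : Equiv.Perm (Fin k)),
    m ≠ 0 ∧ k ≠ 0 ∧ a = ⟨m + k, ssum σ τ⟩

/-- iterated (right-nested) skew sum `a ⊖ (b₁ ⊖ (b₂ ⊖ ⋯))`. -/
def skewFold (a : PermSig) : List PermSig → PermSig
  | [] => a
  | b :: rest => ⟨_, ssum a.2 (skewFold b rest).2⟩

theorem ssum_castAdd {m k : ℕ} (σ : Equiv.Perm (Fin m)) (τ : Equiv.Perm (Fin k)) (i : Fin m) :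
    ((ssum σ τ (Fin.castAdd k i) : Fin (m + k)) : ℕ) = k + (σ i : ℕ) := by
  simp [ssum, Nat.add_comm]

theorem ssum_natAdd {m k : ℕ} (σ : Equiv.Perm (Fin m)) (τ : Equiv.Perm (Fin k)) (i : Fin k) :
    ((ssum σ τ (Fin.natAdd m i) : Fin (m + k)) : ℕ) = (τ i : ℕ) := by
  simp [ssum]

theorem sepPair_high {m k : ℕ} (σ : Equiv.Perm (Fin m)) (τ : Equiv.Perm (Fin k)) (v : Fin m)
    (w : Fin (m + k)) (hw : (w : ℕ) = k + v) :
    IsSepPair (ssum σ τ) w ↔ IsSepPair σ v := by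
  constructor
  · rintro ⟨p, q, r, hpq, hqr, h1, h2, h3⟩
    have h3' : ((ssum σ τ r : Fin (m + k)) : ℕ) = w := by rw [h3]
    induction r using Fin.addCases with
    | right r => rw [ssum_natAdd] at h3'; omega
    | left r =>
    induction q using Fin.addCases with
    | right q => rw [ssum_natAdd] at h2; omega
    | left q =>
    induction p using Fin.addCases with
    | right p => rw [ssum_natAdd] at h1; omega
    | left p =>
    rw [ssum_castAdd] at h1 h2 h3'
    simp only [Fin.lt_def, Fin.val_castAdd] at hpq hqr
    exact ⟨p, q, r, hpq, hqr, by omega, by omega, Fin.ext (by omega)⟩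
  · rintro ⟨p, q, r, hpq, hqr, h1, h2, h3⟩
    refine ⟨Fin.castAdd k p, Fin.castAdd k q, Fin.castAdd k r, ?_, ?_, ?_, ?_, Fin.ext ?_⟩
    · exact hpq
    · exact hqr
    · rw [ssum_castAdd]; omega
    · rw [ssum_castAdd]; omega
    · rw [ssum_castAdd, h3]; omega

theorem sepPair_low {m k : ℕ} (σ : Equiv.Perm (Fin m)) (τ : Equiv.Perm (Fin k)) (v : Fin k)
    (w : Fin (m + k)) (hw : (w : ℕ) = v) (hv : (v : ℕ) + 1 ≠ k) :
    IsSepPair (ssum σ τ) w ↔ IsSepPair τ v := by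
  constructor
  · rintro ⟨p, q, r, hpq, hqr, h1, h2, h3⟩
    have h3' : ((ssum σ τ r : Fin (m + k)) : ℕ) = w := by rw [h3]
    induction p using Fin.addCases with
    | left p => rw [ssum_castAdd] at h1; omega
    | right p =>
    induction q using Fin.addCases with
    | left q =>
      simp only [Fin.lt_def, Fin.val_castAdd, Fin.val_natAdd] at hpq; omega
    | right q =>
    induction r using Fin.addCases with
    | left r =>
      simp only [Fin.lt_def, Fin.val_castAdd, Fin.val_natAdd] at hqr; omega
    | right r =>
    rw [ssum_natAdd] at h1 h2 h3'
    simp only [Fin.lt_def, Fin.val_natAdd] at hpq hqr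
    exact ⟨p, q, r, by rw [Fin.lt_def]; omega, by rw [Fin.lt_def]; omega,
      by omega, by omega, Fin.ext (by omega)⟩
  · rintro ⟨p, q, r, hpq, hqr, h1, h2, h3⟩
    refine ⟨Fin.natAdd m p, Fin.natAdd m q, Fin.natAdd m r, ?_, ?_, ?_, ?_, Fin.ext ?_⟩
    · exact (Fin.natAdd_lt_natAdd_iff m).mpr hpq
    · exact (Fin.natAdd_lt_natAdd_iff m).mpr hqr
    · rw [ssum_natAdd]; omega
    · rw [ssum_natAdd]; omega
    · rw [ssum_natAdd, h3]; omega

theorem not_sepPair_top {k : ℕ} (τ : Equiv.Perm (Fin k)) (v : Fin k) (hv : (v : ℕ) + 1 = k) :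
    ¬ IsSepPair τ v := by
  rintro ⟨p, q, r, hpq, hqr, h1, h2, h3⟩
  have := (τ p).isLt
  omega

theorem decomp_of_last {m : ℕ} (σ : Equiv.Perm (Fin (m + 1))) (h : σ (Fin.last m) = 0) :
    ∃ σ' : Equiv.Perm (Fin m), σ = ssum σ' (1 : Equiv.Perm (Fin 1)) := by
  have h0 : ∀ i : Fin m, σ i.castSucc ≠ 0 := by
    intro i hi
    have := σ.injective (hi.trans h.symm)
    exact absurd this (Fin.castSucc_lt_last i).ne
  let f : Fin m → Fin m := fun i => (σ i.castSucc).pred (h0 i)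
  have hf : Function.Injective f := by
    intro i j hij
    have := Fin.pred_inj.mp hij
    exact Fin.castSucc_injective _ (σ.injective this)
  refine ⟨Equiv.ofBijective f (Finite.injective_iff_bijective.mp hf), ?_⟩
  apply Equiv.ext
  intro x
  apply Fin.ext
  induction x using Fin.addCases with
  | left i =>
    rw [ssum_castAdd]
    have h1 := h0 i
    have h2 : (σ i.castSucc : ℕ) ≠ 0 := fun h => h1 (Fin.ext h)
    change (σ i.castSucc : ℕ) = 1 + ((σ i.castSucc).pred (h0 i) : ℕ)
    rw [Fin.val_pred]; omega
  | right i =>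
    rw [ssum_natAdd]
    have : Fin.natAdd m i = Fin.last m := by
      apply Fin.ext; simp
    rw [this, h]; simp

theorem sepPair_mid {m k : ℕ} (σ : Equiv.Perm (Fin m)) (τ : Equiv.Perm (Fin k))
    (hσ : MinusIndec ⟨m, σ⟩) (v : Fin k)
    (w : Fin (m + k)) (hw : (w : ℕ) = v) (hv : (v : ℕ) + 1 = k) :
    IsSepPair (ssum σ τ) w ↔ m ≠ 1 := by
  constructor
  · rintro ⟨p, q, r, hpq, hqr, h1, h2, h3⟩ rfl
    induction p using Fin.addCases with
    | right p => rw [ssum_natAdd] at h1; omega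
    | left p =>
    induction q using Fin.addCases with
    | right q => rw [ssum_natAdd] at h2; omega
    | left q =>
    simp only [Fin.lt_def, Fin.val_castAdd] at hpq; omega
  · intro hm
    obtain ⟨hm0, hi⟩ := hσ
    change m ≠ 0 at hm0
    obtain ⟨m, rfl⟩ := Nat.exists_eq_succ_of_ne_zero hm0
    have hl : σ (Fin.last m) ≠ 0 := by
      intro h
      obtain ⟨σ', h'⟩ := decomp_of_last σ h
      exact hi ⟨m, 1, σ', 1, by omega, by omega, by rw [h']⟩
    have hl' : (σ (Fin.last m) : ℕ) ≠ 0 := fun h => hl (Fin.ext h)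
    have hp : σ.symm 0 ≠ Fin.last m := by
      intro h
      apply hl
      rw [← h, Equiv.apply_symm_apply]
    refine ⟨Fin.castAdd k (σ.symm 0), Fin.castAdd k (Fin.last m),
      Fin.natAdd (m + 1) (τ.symm v), ?_, ?_, ?_, ?_, Fin.ext ?_⟩
    · have := Fin.lt_last_iff_ne_last.mpr hp
      simpa [Fin.lt_def] using this
    · simp only [Fin.lt_def, Fin.val_castAdd, Fin.val_natAdd, Fin.val_last]; omega
    · rw [ssum_castAdd, Equiv.apply_symm_apply]; simp; omega
    · rw [ssum_castAdd]; omega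
    · rw [ssum_natAdd, Equiv.apply_symm_apply]; omega

open Classical in
theorem sep_eq_sum {n : ℕ} (π : Equiv.Perm (Fin n)) :
    sep π = ∑ v : Fin n, if IsSepPair π v then 1 else 0 := by
  rw [sep, Set.ncard_eq_toFinset_card', Finset.sum_boole]
  simp

theorem sep_ssum {m k : ℕ} (σ : Equiv.Perm (Fin m)) (τ : Equiv.Perm (Fin k))
    (hσ : MinusIndec ⟨m, σ⟩) (hk : k ≠ 0) :
    sep (ssum σ τ) = sep σ + sep τ + if m = 1 then 0 else 1 := by
  classical
  obtain ⟨k, rfl⟩ := Nat.exists_eq_succ_of_ne_zero hk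
  rw [sep_eq_sum, sep_eq_sum, sep_eq_sum,
    ← Equiv.sum_comp (finCongr (Nat.add_comm (k + 1) m)), Fin.sum_univ_add]
  have e1 : ∀ v : Fin m, (if IsSepPair (ssum σ τ)
      (finCongr (Nat.add_comm (k + 1) m) (Fin.natAdd (k + 1) v)) then 1 else 0)
      = if IsSepPair σ v then 1 else 0 := by
    intro v
    rw [sepPair_high σ τ v _ (by simp [Nat.add_comm])]
  rw [Finset.sum_congr rfl (fun v _ => e1 v), Fin.sum_univ_castSucc,
    Fin.sum_univ_castSucc (n := k)]
  have e2 : ∀ v : Fin k, (if IsSepPair (ssum σ τ)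
      (finCongr (Nat.add_comm (k + 1) m) (Fin.castAdd m v.castSucc)) then 1 else 0)
      = if IsSepPair τ v.castSucc then 1 else 0 := by
    intro v
    rw [sepPair_low σ τ v.castSucc _ (by simp) (by simp; omega)]
  rw [Finset.sum_congr rfl (fun v _ => e2 v)]
  rw [if_neg (not_sepPair_top τ (Fin.last k) (by simp))]
  rw [sepPair_mid σ τ hσ (Fin.last k) _ (by simp) (by simp)]
  split_ifs <;> first | omega | contradiction

theorem skewFold_ne_zero (a : PermSig) (L : List PermSig) (h : a.1 ≠ 0) :
    (skewFold a L).1 ≠ 0 := by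
  cases L with
  | nil => exact h
  | cons b rest =>
    change a.1 + (skewFold b rest).1 ≠ 0
    omega

/-- If `π = σ₁ ⊖ σ₂ ⊖ ⋯ ⊖ σ_p` with each `σᵢ` minus-indecomposable, and `r`
is the number of `σᵢ` with `i < p` of length one, then
`sep π = p - r - 1 + ∑ᵢ sep σᵢ`. -/
theorem sep_skew_decomposition (a : PermSig) (L : List PermSig)
    (h : ∀ b ∈ a :: L, MinusIndec b) :
    sep (skewFold a L).2 =
      (a :: L).length - (((a :: L).dropLast.filter (fun b => b.1 == 1)).length) - 1
        + ((a :: L).map (fun b => sep b.2)).sum := by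
  induction L generalizing a with
  | nil => simp [skewFold]
  | cons b rest ih =>
    have ih' := ih b (fun c hc => h c (List.mem_cons_of_mem _ hc))
    have hb := h b (by simp)
    have key := sep_ssum a.2 (skewFold b rest).2 (h a (by simp)) (skewFold_ne_zero b rest hb.1)
    have hlen : (((b :: rest).dropLast.filter (fun b => b.1 == 1)).length) ≤ rest.length := by
      refine (List.length_filter_le _ _).trans ?_
      simp
    change sep (ssum a.2 (skewFold b rest).2) = _
    rw [key, ih', List.dropLast_cons_cons, List.filter_cons, List.map_cons (l := b :: rest),
      List.sum_cons, List.length_cons (as := b :: rest), List.length_cons (as := rest)]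
    by_cases h1 : a.1 = 1
    · simp only [h1, beq_self_eq_true, if_true, List.length_cons]
      omega
    · simp only [h1, beq_iff_eq, if_false]
      omega
end
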